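/- Let (W_n)_{n≥1} be graphons and W_0 a graphon with ‖W_n − W_0‖_□ → 0 as n → ∞. Then ‖L_{W_n} − L_{W_0}‖_{∞→1} → 0 as n → ∞, where L_W := M_{d_W} − T_W is the (unnormalized) Laplacian. In particular, the degree functions satisfy ‖d_{W_n} − d_{W_0}‖_{L¹([0,1])} ≤ 4 ‖W_n − W_0‖_□ → 0. -/

import Mathlib

/-!
Write `U = Wₙ − W₀` and `c = ‖U‖_□`. The heart of the matter is the bound `‖T_U‖_{∞→1} ≤ 4c`
(`integral_abs_kernel_le`). It rests on an elementary observation (`integral_abs_le_two_mul`):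
splitting `[0,1]` according to the sign of `k` shows that `∫ |k| ≤ 2c` as soon as
`|∫_B k| ≤ c` for every measurable `B`. For measurable `A` this applies to
`k_A(y) = ∫_A U(x,y) dx`, whose integral over `B` is the cut integral over `A × B`; so by Fubini
`|∫_A T_U f| = |∫ f k_A| ≤ 2c` whenever `|f| ≤ 1`. Applying the observation again, now to
`T_U f`, gives `‖T_U f‖₁ ≤ 4c`.

Taking `f = 1` bounds the degree functions. Since
`L_{Wₙ} f − L_{W₀} f = (d_{Wₙ} − d_{W₀}) f − T_U f`, the Laplacians differ by at most `8c` in the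
`∞ → 1` norm.
-/

open MeasureTheory Set Filter

noncomputable section

/-- The unit interval `[0,1]` as a subset of `ℝ`. -/
def I01 : Set ℝ := Set.Icc 0 1

/-- A graphon: a symmetric measurable kernel with values in `[0,1]`. -/
structure Graphon where
  W : ℝ → ℝ → ℝ
  measurable : Measurable (Function.uncurry W)
  symm : ∀ x y, W x y = W y x
  nonneg : ∀ x y, 0 ≤ W x y
  le_one : ∀ x y, W x y ≤ 1

/-- The cut norm `‖U‖_□` of a kernel `U`. -/
def cutNorm (U : ℝ → ℝ → ℝ) : ℝ :=
  sSup { r | ∃ A B : Set ℝ, MeasurableSet A ∧ MeasurableSet B ∧ A ⊆ I01 ∧ B ⊆ I01 ∧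
    r = |∫ x in A, ∫ y in B, U x y| }

/-- The degree function of a graphon: `d_W(x) = ∫₀¹ W(x,y) dy`. -/
def deg (V : Graphon) (x : ℝ) : ℝ := ∫ y in I01, V.W x y

/-- The (unnormalized) Laplacian `L_W = M_{d_W} − T_W` applied to a function `f`. -/
def lap (V : Graphon) (f : ℝ → ℝ) (x : ℝ) : ℝ :=
  deg V x * f x - ∫ y in I01, V.W x y * f y

/-- The `L^∞ → L¹` operator norm of a map `T` on functions:
`sup { ‖T f‖_{L¹[0,1]} : ‖f‖_∞ ≤ 1 }`. -/
def normInftyOne (T : (ℝ → ℝ) → ℝ → ℝ) : ℝ :=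
  sSup { r | ∃ f : ℝ → ℝ, Measurable f ∧ (∀ x, |f x| ≤ 1) ∧ r = ∫ x in I01, |T f x| }

lemma measurableSet_I01 : MeasurableSet I01 := measurableSet_Icc

lemma volume_I01 : volume I01 = 1 := by simp [I01]

lemma volume_real_le_one {A : Set ℝ} (hA : A ⊆ I01) : volume.real A ≤ 1 := by
  have h := measureReal_mono (μ := volume) hA (by simp [volume_I01])
  simpa [Measure.real, volume_I01] using h

lemma isFiniteMeasure_restrict {A : Set ℝ} (hA : A ⊆ I01) :
    IsFiniteMeasure (volume.restrict A) :=
  ⟨by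
    rw [Measure.restrict_apply_univ]
    exact (measure_mono hA).trans_lt (by simp [volume_I01])⟩

lemma integrableOn_of_bound {k : ℝ → ℝ} (hk : Measurable k) {M : ℝ} (hb : ∀ x, |k x| ≤ M)
    {A : Set ℝ} (hA : A ⊆ I01) : IntegrableOn k A := by
  have := isFiniteMeasure_restrict hA
  exact Integrable.of_bound hk.aestronglyMeasurable M (ae_of_all _ hb)

lemma abs_setIntegral_le {k : ℝ → ℝ} (hb : ∀ x, |k x| ≤ 1) {A : Set ℝ} (hA : A ⊆ I01) :
    |∫ x in A, k x| ≤ 1 := by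
  have h := norm_setIntegral_le_of_norm_le_const (μ := volume) (s := A) (f := k) (C := 1)
    ((measure_mono hA).trans_lt (by simp [volume_I01])) (fun x _ => hb x)
  rw [one_mul] at h
  exact h.trans (volume_real_le_one hA)

lemma measurable_setIntegral {U : ℝ → ℝ → ℝ} (hU : Measurable (Function.uncurry U))
    {B : Set ℝ} (hB : B ⊆ I01) : Measurable fun x => ∫ y in B, U x y := by
  have := isFiniteMeasure_restrict hB
  exact (hU.stronglyMeasurable.integral_prod_right (ν := volume.restrict B)).measurable

lemma setIntegral_swap {U : ℝ → ℝ → ℝ} (hU : Measurable (Function.uncurry U))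
    (hb : ∀ x y, |U x y| ≤ 1) {A B : Set ℝ} (hA : A ⊆ I01) (hB : B ⊆ I01) :
    ∫ x in A, ∫ y in B, U x y = ∫ y in B, ∫ x in A, U x y := by
  have := isFiniteMeasure_restrict hA
  have := isFiniteMeasure_restrict hB
  exact integral_integral_swap
    (Integrable.of_bound hU.aestronglyMeasurable 1 (ae_of_all _ fun p => hb p.1 p.2))

/-- The supremum defining the cut norm is over a bounded set when `|U| ≤ 1`, so that it really
dominates every cut integral. -/
lemma abs_cut_le_cutNorm {U : ℝ → ℝ → ℝ} (hb : ∀ x y, |U x y| ≤ 1) {A B : Set ℝ}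
    (hAm : MeasurableSet A) (hBm : MeasurableSet B) (hA : A ⊆ I01) (hB : B ⊆ I01) :
    |∫ x in A, ∫ y in B, U x y| ≤ cutNorm U := by
  refine le_csSup ⟨1, ?_⟩ ⟨A, B, hAm, hBm, hA, hB, rfl⟩
  rintro r ⟨A, B, -, -, hA, hB, rfl⟩
  exact abs_setIntegral_le (fun x => abs_setIntegral_le (hb x) hB) hA

/-- Splitting `[0,1]` according to the sign of `k` bounds its `L¹` norm by twice the largest
integral of `k` over a measurable subset. -/
lemma integral_abs_le_two_mul {k : ℝ → ℝ} (hk : Measurable k) (hb : ∀ x, |k x| ≤ 1) {c : ℝ}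
    (hc : ∀ B : Set ℝ, MeasurableSet B → B ⊆ I01 → |∫ x in B, k x| ≤ c) :
    ∫ x in I01, |k x| ≤ 2 * c := by
  have hP : MeasurableSet {x | 0 ≤ k x} := measurableSet_le measurable_const hk
  have hint : IntegrableOn (fun x => |k x|) I01 :=
    (integrableOn_of_bound hk hb subset_rfl).abs
  have h1m : MeasurableSet (I01 ∩ {x | 0 ≤ k x}) := measurableSet_I01.inter hP
  have h2m : MeasurableSet (I01 \ {x | 0 ≤ k x}) := measurableSet_I01.diff hP
  rw [← integral_inter_add_sdiff hP hint]
  have e1 : ∫ x in I01 ∩ {x | 0 ≤ k x}, |k x| = ∫ x in I01 ∩ {x | 0 ≤ k x}, k x :=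
    setIntegral_congr_fun h1m fun x hx => abs_of_nonneg hx.2
  have e2 : ∫ x in I01 \ {x | 0 ≤ k x}, |k x| = -∫ x in I01 \ {x | 0 ≤ k x}, k x := by
    rw [← integral_neg]
    exact setIntegral_congr_fun h2m fun x hx => abs_of_neg (not_le.mp hx.2)
  rw [e1, e2]
  have b1 := (abs_le.mp (hc _ h1m inter_subset_left)).2
  have b2 := (abs_le.mp (hc _ h2m sdiff_subset)).1
  linarith

/-- The bound `‖T_U‖_{∞→1} ≤ 4 ‖U‖_□`. -/
lemma integral_abs_kernel_le {U : ℝ → ℝ → ℝ} (hU : Measurable (Function.uncurry U))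
    (hb : ∀ x y, |U x y| ≤ 1) {f : ℝ → ℝ} (hf : Measurable f) (hf1 : ∀ x, |f x| ≤ 1) :
    ∫ x in I01, |∫ y in I01, U x y * f y| ≤ 4 * cutNorm U := by
  have hUf : Measurable (Function.uncurry fun x y => U x y * f y) :=
    hU.mul (hf.comp measurable_snd)
  have hUfb : ∀ x y, |U x y * f y| ≤ 1 := fun x y => by
    rw [abs_mul]
    exact mul_le_one₀ (hb x y) (abs_nonneg _) (hf1 y)
  have hUswap : Measurable (Function.uncurry fun y x => U x y) := hU.comp measurable_swap
  have key : ∀ A : Set ℝ, MeasurableSet A → A ⊆ I01 →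
      |∫ x in A, ∫ y in I01, U x y * f y| ≤ 2 * cutNorm U := by
    intro A hAm hA
    have hkm : Measurable fun y => ∫ x in A, U x y := measurable_setIntegral hUswap hA
    have hkb : ∀ y, |∫ x in A, U x y| ≤ 1 := fun y => abs_setIntegral_le (fun x => hb x y) hA
    rw [setIntegral_swap hUf hUfb hA subset_rfl]
    simp only [integral_mul_const]
    calc |∫ y in I01, (∫ x in A, U x y) * f y|
        ≤ ∫ y in I01, |(∫ x in A, U x y) * f y| := abs_integral_le_integral_abs
      _ ≤ ∫ y in I01, |∫ x in A, U x y| := by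
          refine integral_mono_of_nonneg (ae_of_all _ fun y => abs_nonneg _)
            (integrableOn_of_bound hkm hkb subset_rfl).abs (ae_of_all _ fun y => ?_)
          simp only [abs_mul]
          exact mul_le_of_le_one_right (abs_nonneg _) (hf1 y)
      _ ≤ 2 * cutNorm U := by
          refine integral_abs_le_two_mul hkm hkb fun B hBm hB => ?_
          rw [← setIntegral_swap hU hb hA hB]
          exact abs_cut_le_cutNorm hb hAm hBm hA hB
  have h := integral_abs_le_two_mul (measurable_setIntegral hUf subset_rfl)
    (fun x => abs_setIntegral_le (hUfb x) subset_rfl) key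
  linarith

lemma Graphon.measurable_sub (V V' : Graphon) :
    Measurable (Function.uncurry fun x y => V.W x y - V'.W x y) :=
  V.measurable.sub V'.measurable

lemma Graphon.abs_sub_le (V V' : Graphon) (x y : ℝ) : |V.W x y - V'.W x y| ≤ 1 := by
  rw [abs_le]
  constructor <;> linarith [V.nonneg x y, V'.nonneg x y, V.le_one x y, V'.le_one x y]

lemma Graphon.integrableOn_mul (V : Graphon) {f : ℝ → ℝ} (hf : Measurable f)
    (hf1 : ∀ x, |f x| ≤ 1) (x : ℝ) : IntegrableOn (fun y => V.W x y * f y) I01 := by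
  refine integrableOn_of_bound (M := 1) ?_ (fun y => ?_) subset_rfl
  · exact (V.measurable.comp measurable_prodMk_left).mul hf
  · rw [abs_mul, abs_of_nonneg (V.nonneg x y)]
    exact mul_le_one₀ (V.le_one x y) (abs_nonneg _) (hf1 y)

lemma kernel_sub (V V' : Graphon) {f : ℝ → ℝ} (hf : Measurable f) (hf1 : ∀ x, |f x| ≤ 1)
    (x : ℝ) : (∫ y in I01, V.W x y * f y) - ∫ y in I01, V'.W x y * f y
      = ∫ y in I01, (V.W x y - V'.W x y) * f y := by
  simp only [sub_mul]
  exact (integral_sub (V.integrableOn_mul hf hf1 x) (V'.integrableOn_mul hf hf1 x)).symm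

lemma deg_sub (V V' : Graphon) (x : ℝ) :
    deg V x - deg V' x = ∫ y in I01, (V.W x y - V'.W x y) * 1 := by
  have h := kernel_sub V V' (f := fun _ => 1) measurable_const (by simp) x
  simpa [deg] using h

lemma integral_abs_deg_sub_le (V V' : Graphon) :
    ∫ x in I01, |deg V x - deg V' x| ≤ 4 * cutNorm fun x y => V.W x y - V'.W x y := by
  simp only [deg_sub]
  exact integral_abs_kernel_le (V.measurable_sub V') (V.abs_sub_le V') (f := fun _ => 1)
    measurable_const (by simp)

lemma normInftyOne_lap_sub_le (V V' : Graphon) :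
    normInftyOne (fun f x => lap V f x - lap V' f x)
      ≤ 8 * cutNorm fun x y => V.W x y - V'.W x y := by
  refine csSup_le ⟨_, fun _ => 0, measurable_const, by simp, rfl⟩ ?_
  rintro r ⟨f, hf, hf1, rfl⟩
  have hUf : Measurable (Function.uncurry fun x y => (V.W x y - V'.W x y) * f y) :=
    (V.measurable_sub V').mul (hf.comp measurable_snd)
  have hUfb : ∀ x y, |(V.W x y - V'.W x y) * f y| ≤ 1 := fun x y => by
    rw [abs_mul]
    exact mul_le_one₀ (V.abs_sub_le V' x y) (abs_nonneg _) (hf1 y)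
  have hT : IntegrableOn (fun x => |∫ y in I01, (V.W x y - V'.W x y) * f y|) I01 :=
    (integrableOn_of_bound (measurable_setIntegral hUf subset_rfl)
      (fun x => abs_setIntegral_le (hUfb x) subset_rfl) subset_rfl).abs
  have hD : IntegrableOn (fun x => |deg V x - deg V' x|) I01 := by
    refine (integrableOn_of_bound (M := 1) ?_ (fun x => ?_) subset_rfl).abs
    · exact (measurable_setIntegral V.measurable subset_rfl).sub
        (measurable_setIntegral V'.measurable subset_rfl)
    · rw [deg_sub]
      exact abs_setIntegral_le (fun y => by simpa using V.abs_sub_le V' x y) subset_rfl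
  calc ∫ x in I01, |lap V f x - lap V' f x|
      ≤ ∫ x in I01, (|deg V x - deg V' x| + |∫ y in I01, (V.W x y - V'.W x y) * f y|) := by
        refine integral_mono_of_nonneg (ae_of_all _ fun x => abs_nonneg _) (hD.add hT)
          (ae_of_all _ fun x => ?_)
        have e : lap V f x - lap V' f x = (deg V x - deg V' x) * f x
            - ∫ y in I01, (V.W x y - V'.W x y) * f y := by
          rw [← kernel_sub V V' hf hf1 x, lap, lap]
          ring
        simp only [e]
        refine (abs_sub _ _).trans (add_le_add_left ?_ _)
        rw [abs_mul]
        exact mul_le_of_le_one_right (abs_nonneg _) (hf1 x)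
    _ = (∫ x in I01, |deg V x - deg V' x|)
          + ∫ x in I01, |∫ y in I01, (V.W x y - V'.W x y) * f y| := integral_add hD hT
    _ ≤ 8 * cutNorm fun x y => V.W x y - V'.W x y := by
        have h1 := integral_abs_deg_sub_le V V'
        have h2 := integral_abs_kernel_le (V.measurable_sub V') (V.abs_sub_le V') hf hf1
        linarith

/-- **Convergence of (unnormalized) Laplacians.** If `‖Wₙ − W₀‖_□ → 0` then
`‖L_{Wₙ} − L_{W₀}‖_{∞→1} → 0`; in particular the degree functions satisfy
`‖d_{Wₙ} − d_{W₀}‖_{L¹} ≤ 4 ‖Wₙ − W₀‖_□ → 0`. -/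
theorem laplacian_convergence
    (W : ℕ → Graphon)
    (hconv : Tendsto (fun n => cutNorm fun x y => (W n).W x y - (W 0).W x y)
      atTop (nhds 0)) :
    Tendsto (fun n => normInftyOne fun f x => lap (W n) f x - lap (W 0) f x)
      atTop (nhds 0) ∧
    (∀ n, (∫ x in I01, |deg (W n) x - deg (W 0) x|)
      ≤ 4 * cutNorm fun x y => (W n).W x y - (W 0).W x y) ∧
    Tendsto (fun n => ∫ x in I01, |deg (W n) x - deg (W 0) x|) atTop (nhds 0) := by
  have hdeg : ∀ n, (∫ x in I01, |deg (W n) x - deg (W 0) x|)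
      ≤ 4 * cutNorm fun x y => (W n).W x y - (W 0).W x y :=
    fun n => integral_abs_deg_sub_le (W n) (W 0)
  refine ⟨?_, hdeg, ?_⟩
  · refine squeeze_zero (fun n => ?_) (fun n => normInftyOne_lap_sub_le (W n) (W 0)) ?_
    · refine Real.sSup_nonneg ?_
      rintro r ⟨f, -, -, rfl⟩
      exact integral_nonneg fun x => abs_nonneg _
    · simpa using hconv.const_mul 8
  · refine squeeze_zero (fun n => integral_nonneg fun x => abs_nonneg _) hdeg ?_
    simpa using hconv.const_mul 4

end
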